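/- (Existence of an equivalent canonical functional form; correctness content of the Variable_Elimination algorithm.) Let P be a binary CSP with a finite set of variables V, finite domains (D_v)_{v∈V}, and at most one constraint c_{uv} ⊆ D_u × D_v per ordered pair of distinct variables, with (a,b) ∈ c_{uv} iff (b,a) ∈ c_{vu}. Then there exists a binary CSP P' on the same variable set V, with domains D'_v ⊆ D_v and at most one constraint per ordered pair of distinct variables (again with the converse symmetry), such that P' is in canonical functional form and P' has exactly the same set of solutions as P (as subsets of the product of the original domains). -/

import Mathlib

/-- A binary CSP over a variable set `V` with ambient value types `D v`:
domains `dom v ⊆ D v`, a set `cons` of (ordered) constrained pairs of distinct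
variables, and at most one constraint relation `C u v ⊆ dom u × dom v` per ordered
pair, with the converse symmetry `(a,b) ∈ c_{uv} ↔ (b,a) ∈ c_{vu}`. -/
structure BinaryCSP (V : Type*) (D : V → Type*) where
  dom : ∀ v : V, Set (D v)
  cons : V → V → Prop
  C : ∀ u v : V, Set (D u × D v)
  cons_symm : ∀ u v : V, cons u v → cons v u
  cons_ne : ∀ u v : V, cons u v → u ≠ v
  C_symm : ∀ u v : V, cons u v → ∀ (a : D u) (b : D v), (a, b) ∈ C u v ↔ (b, a) ∈ C v u
  C_dom : ∀ u v : V, cons u v → ∀ p ∈ C u v, p.1 ∈ dom u ∧ p.2 ∈ dom v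

/-- A solution: an assignment of a domain value to each variable satisfying all
constraints. -/
def BinaryCSP.Solution {V : Type*} {D : V → Type*} (P : BinaryCSP V D)
    (τ : ∀ v : V, D v) : Prop :=
  (∀ v : V, τ v ∈ P.dom v) ∧ ∀ u v : V, P.cons u v → (τ u, τ v) ∈ P.C u v

/-- The constraint `c_{uv}` is functional on its second variable `v`. -/
def BinaryCSP.FunctionalOn {V : Type*} {D : V → Type*} (P : BinaryCSP V D)
    (u v : V) : Prop :=
  ∀ (a : D u) (b b' : D v), (a, b) ∈ P.C u v → (a, b') ∈ P.C u v → b = b'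

/-- Variable `j` is constrained by no constraint of the CSP other than (possibly) the
one with `i`. -/
def BinaryCSP.OnlyConstraint {V : Type*} {D : V → Type*} (P : BinaryCSP V D)
    (j i : V) : Prop :=
  ∀ k : V, k ≠ i → ¬ P.cons j k

/-- Canonical functional form: for every constraint `c_{ij}` functional on `j`, if
`c_{ij}` is bi-functional then at least one of `i`, `j` has no other constraint;
otherwise `j` has no other constraint. -/
def BinaryCSP.Canonical {V : Type*} {D : V → Type*} (P : BinaryCSP V D) : Prop :=
  ∀ i j : V, P.cons i j → P.FunctionalOn i j →
    (P.FunctionalOn j i → (P.OnlyConstraint i j ∨ P.OnlyConstraint j i)) ∧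
    (¬ P.FunctionalOn j i → P.OnlyConstraint j i)

/-!
Let `c_{ij}` be functional on `j`. Once `c_{ij}` holds, the value of `i` determines that of `j`, so
every other constraint `c_{jk}` may be replaced by the constraint `c_{ij} ∘ c_{jk}` between `i` and
`k`, intersected with `c_{ik}` if there is one. Afterwards `j` is a functional leaf: it has a single
neighbour, whose value determines its own. The old functional leaves survive, provided `i` is not
among them: one that hung at `j` now hangs at `i`, through a composition of functional constraints.
So among the equivalent CSPs take one whose set of functional leaves is maximal. Each of its
functional constraints has a functional leaf as an endpoint, since otherwise eliminating `j` would
create a new one, and such a CSP is in canonical form.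
-/

namespace BinaryCSP

variable {V : Type*} {D : V → Type*} (P : BinaryCSP V D) {i j u v : V} {τ : ∀ v, D v}

/-- The functional leaves: variables with at most one neighbour, whose value determines theirs.
They are the variables that no longer need to be eliminated; isolated variables count. -/
def functionalLeaves : Set V :=
  {e | ∀ k, P.cons e k → P.FunctionalOn k e ∧ P.OnlyConstraint e k}

/-- The pairs of values admitted by the domains of `u` and `v` and, if there is one, by `c_{uv}`:
this extends `P.C u v`, which is meaningless on unconstrained pairs, to all pairs of variables. -/
def admissible (u v : V) : Set (D u × D v) :=
  {p | p.1 ∈ P.dom u ∧ p.2 ∈ P.dom v ∧ (P.cons u v → p ∈ P.C u v)}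

/-- The restriction `c_{ij} ∘ c_{jv}` that a neighbour `v` of `j` imposes on the pair `(i, v)`.
It is indexed by a further variable `u`, and is no restriction unless `u = i`, so that it can be
intersected with the constraint of an arbitrary pair `(u, v)` without transporting values. -/
def detour (i j u v : V) : Set (D u × D v) :=
  {p | u = i → P.cons j v → p ∈ SetRel.comp (P.C u j) (P.C j v)}

/-- `(u, v)` is a pair `(i, v)` constrained after the elimination of `j` through `c_{ij}`, namely
one where `v` is `j` itself or a neighbour of `j`. -/
def Redirected (i j u v : V) : Prop :=
  u = i ∧ v ≠ i ∧ (v = j ∨ P.cons j v)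

/-- The elimination of `j` through `c_{ij}`: the other constraints `c_{jv}` are redirected to `i`.
The result is meaningful when `c_{ij}` is a constraint functional on `j`. -/
def eliminate (i j : V) : BinaryCSP V D where
  dom := P.dom
  cons u v := P.Redirected i j u v ∨ P.Redirected i j v u ∨ (u ≠ j ∧ v ≠ j ∧ P.cons u v)
  C u v := P.admissible u v ∩ (P.detour i j u v ∩ Prod.swap ⁻¹' P.detour i j v u)
  cons_symm := by
    rintro u v (h | h | ⟨hu, hv, h⟩)
    · exact .inr (.inl h)
    · exact .inl h
    · exact .inr (.inr ⟨hv, hu, P.cons_symm _ _ h⟩)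
  cons_ne := by
    rintro u v (⟨rfl, hv, -⟩ | ⟨rfl, hu, -⟩ | ⟨-, -, h⟩)
    · exact hv.symm
    · exact hu
    · exact P.cons_ne _ _ h
  C_symm := by
    have swap_mem {u v : V} {a : D u} {b : D v} (h : (a, b) ∈ P.admissible u v) :
        (b, a) ∈ P.admissible v u :=
      ⟨h.2.1, h.1, fun hvu => (P.C_symm _ _ hvu _ _).2 (h.2.2 (P.cons_symm _ _ hvu))⟩
    exact fun u v _ a b =>
      ⟨fun ⟨h, hu, hv⟩ => ⟨swap_mem h, hv, hu⟩, fun ⟨h, hv, hu⟩ => ⟨swap_mem h, hu, hv⟩⟩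
  C_dom _ _ _ _ hp := ⟨hp.1.1, hp.1.2.1⟩

variable {P}

theorem canonical_of_forall_mem_functionalLeaves
    (h : ∀ i j, P.cons i j → P.FunctionalOn i j →
      i ∈ P.functionalLeaves ∨ j ∈ P.functionalLeaves) : P.Canonical := by
  intro i j hij hf
  rcases h i j hij hf with hi | hj
  · obtain ⟨hfun, honly⟩ := hi j hij
    exact ⟨fun _ => .inl honly, fun hnot => absurd hfun hnot⟩
  · have honly := (hj i (P.cons_symm _ _ hij)).2
    exact ⟨fun _ => .inr honly, fun _ => honly⟩

theorem Solution.mem_admissible (h : P.Solution τ) (u v : V) : (τ u, τ v) ∈ P.admissible u v :=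
  ⟨h.1 u, h.1 v, h.2 u v⟩

theorem Solution.mem_detour (h : P.Solution τ) (hij : P.cons i j) (u v : V) :
    (τ u, τ v) ∈ P.detour i j u v := by
  rintro rfl hjv
  exact ⟨τ j, h.2 _ _ hij, h.2 _ _ hjv⟩

theorem Solution.eliminate (h : P.Solution τ) (hij : P.cons i j) :
    (P.eliminate i j).Solution τ :=
  ⟨h.1, fun u v _ => ⟨h.mem_admissible u v, h.mem_detour hij u v, h.mem_detour hij v u⟩⟩

theorem Solution.of_eliminate (h : (P.eliminate i j).Solution τ) (hij : P.cons i j)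
    (hf : P.FunctionalOn i j) : P.Solution τ := by
  have mem_ij : (τ i, τ j) ∈ P.C i j :=
    (h.2 i j (.inl ⟨rfl, (P.cons_ne _ _ hij).symm, .inl rfl⟩)).1.2.2 hij
  have mem_jv (v : V) (hjv : P.cons j v) : (τ j, τ v) ∈ P.C j v := by
    by_cases hvi : v = i
    · subst hvi
      exact (P.C_symm _ _ hij _ _).1 mem_ij
    · obtain ⟨b, mem_ib, mem_bv⟩ := (h.2 i v (.inl ⟨rfl, hvi, .inr hjv⟩)).2.1 rfl hjv
      rwa [hf _ _ _ mem_ij mem_ib]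
  refine ⟨h.1, fun u v huv => ?_⟩
  by_cases hu : u = j
  · subst hu
    exact mem_jv v huv
  by_cases hv : v = j
  · subst hv
    exact (P.C_symm _ _ huv _ _).2 (mem_jv u (P.cons_symm _ _ huv))
  exact (h.2 u v (.inr (.inr ⟨hu, hv, huv⟩))).1.2.2 huv

theorem eliminate_solution_iff (hij : P.cons i j) (hf : P.FunctionalOn i j) :
    (P.eliminate i j).Solution τ ↔ P.Solution τ :=
  ⟨fun h => h.of_eliminate hij hf, fun h => h.eliminate hij⟩

theorem eliminate_cons_self_iff (hne : i ≠ j) : (P.eliminate i j).cons j v ↔ v = i := by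
  simp [eliminate, Redirected, hne.symm]

theorem eliminate_cons_iff_of_ne (hi : u ≠ i) (hj : u ≠ j) :
    (P.eliminate i j).cons u v ↔ (v = i ∧ P.cons j u) ∨ (v ≠ j ∧ P.cons u v) := by
  simp [eliminate, Redirected, hi, hj]

theorem FunctionalOn.eliminate (hf : P.FunctionalOn u v) (huv : P.cons u v) :
    (P.eliminate i j).FunctionalOn u v :=
  fun a b b' h h' => hf a b b' (h.1.2.2 huv) (h'.1.2.2 huv)

theorem FunctionalOn.eliminate_trans (hij : P.FunctionalOn i j) (hjv : P.FunctionalOn j v)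
    (hcons : P.cons j v) : (P.eliminate i j).FunctionalOn i v := by
  intro a b b' h h'
  obtain ⟨c, mem_ac, mem_cb⟩ := h.2.1 rfl hcons
  obtain ⟨c', mem_ac', mem_cb'⟩ := h'.2.1 rfl hcons
  obtain rfl := hij _ _ _ mem_ac mem_ac'
  exact hjv _ _ _ mem_cb mem_cb'

theorem mem_functionalLeaves_eliminate (hij : P.cons i j) (hf : P.FunctionalOn i j) :
    j ∈ (P.eliminate i j).functionalLeaves := by
  have hne := P.cons_ne _ _ hij
  intro k hk
  obtain rfl := (eliminate_cons_self_iff hne).1 hk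
  exact ⟨hf.eliminate hij, fun k' hk' h => hk' ((eliminate_cons_self_iff hne).1 h)⟩

theorem functionalLeaves_subset_eliminate (hij : P.cons i j) (hf : P.FunctionalOn i j)
    (hi : i ∉ P.functionalLeaves) :
    P.functionalLeaves ⊆ (P.eliminate i j).functionalLeaves := by
  intro e he
  rcases eq_or_ne e j with rfl | hej
  · exact mem_functionalLeaves_eliminate hij hf
  have hei : e ≠ i := fun h => hi (h ▸ he)
  intro k hk
  rcases (eliminate_cons_iff_of_ne hei hej).1 hk with ⟨rfl, hje⟩ | ⟨hkj, hek⟩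
  · obtain ⟨hfun, honly⟩ := he j (P.cons_symm _ _ hje)
    refine ⟨hf.eliminate_trans hfun hje, fun k' hk' h => ?_⟩
    rcases (eliminate_cons_iff_of_ne hei hej).1 h with ⟨hk'i, -⟩ | ⟨hk'j, hek'⟩
    · exact hk' hk'i
    · exact honly k' hk'j hek'
  · obtain ⟨hfun, honly⟩ := he k hek
    refine ⟨hfun.eliminate (P.cons_symm _ _ hek), fun k' hk' h => ?_⟩
    rcases (eliminate_cons_iff_of_ne hei hej).1 h with ⟨-, hje⟩ | ⟨-, hek'⟩
    · exact honly j hkj.symm (P.cons_symm _ _ hje)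
    · exact honly k' hk' hek'

end BinaryCSP

theorem exists_equivalent_canonical_form_general {V : Type*} [Finite V] {D : V → Type*}
    (P : BinaryCSP V D) :
    ∃ P' : BinaryCSP V D,
      (∀ v : V, P'.dom v ⊆ P.dom v) ∧ P'.Canonical ∧
      ∀ τ : ∀ v : V, D v, (P'.Solution τ ↔ P.Solution τ) := by
  obtain ⟨Q, ⟨hdom, hsol⟩, hmax⟩ := Set.Finite.exists_maximalFor' BinaryCSP.functionalLeaves
    {Q : BinaryCSP V D | (∀ v, Q.dom v ⊆ P.dom v) ∧ ∀ τ, Q.Solution τ ↔ P.Solution τ}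
    (Set.toFinite _) ⟨P, fun _ => subset_rfl, fun _ => Iff.rfl⟩
  refine ⟨Q, hdom, BinaryCSP.canonical_of_forall_mem_functionalLeaves fun i j hij hf => ?_, hsol⟩
  by_contra! ⟨hi, hj⟩
  have leaves_subset : (Q.eliminate i j).functionalLeaves ⊆ Q.functionalLeaves :=
    hmax ⟨hdom, fun τ => (BinaryCSP.eliminate_solution_iff hij hf).trans (hsol τ)⟩
      (BinaryCSP.functionalLeaves_subset_eliminate hij hf hi)
  exact hj (leaves_subset (BinaryCSP.mem_functionalLeaves_eliminate hij hf))

/-- Existence of an equivalent canonical functional form (correctness content of the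
`Variable_Elimination` algorithm): every binary CSP with finitely many variables and
finite domains admits a binary CSP on the same variables, with smaller domains, in
canonical functional form, and with exactly the same solutions. -/
theorem exists_equivalent_canonical_form {V : Type*} [Finite V] {D : V → Type*}
    [∀ v : V, Finite (D v)] (P : BinaryCSP V D) :
    ∃ P' : BinaryCSP V D,
      (∀ v : V, P'.dom v ⊆ P.dom v) ∧ P'.Canonical ∧
      ∀ τ : ∀ v : V, D v, (P'.Solution τ ↔ P.Solution τ) :=
  exists_equivalent_canonical_form_general P
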